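/- Fix a positive integer ℓ, a database x : Fin (2^ℓ) → ZMod 2 and index bits i_1,…,i_ℓ ∈ ZMod 2. Work in the Hilbert space EuclideanSpace ℂ over the index type T = (Π_{k=1}^{ℓ} ((Fin (2^(ℓ−k)) → ZMod 2) × (Fin (2^(ℓ−k)) → ZMod 2))) × ZMod 2 × ZMod 2, a basis point being written ((y_k, y'_k)_{k=1..ℓ}, a, b). With the convention y_0 := x, define for each k ∈ {1,…,ℓ} the linear maps on basis vectors: V_k sends the basis vector at ((y_j,y'_j)_j, a, b) to the basis vector at the same point with a replaced by a + y_k·(y_{k−1}[0]) and b replaced by b + y_k·(y_{k−1}[1]); Z_k multiplies the basis vector at ((y_j,y'_j)_j, a, b) by (−1)^a if i_k = 0 and by (−1)^b if i_k = 1; H_k sends the basis vector at a point with (y_k, y'_k) = (z, z') to 2^(−2^(ℓ−k)) · Σ_{u,v : Fin (2^(ℓ−k)) → ZMod 2} (−1)^(z·u + z'·v) times the basis vector at the point with (y_k,y'_k) replaced by (u,v) and all other coordinates unchanged. Let G_k = H_k ∘ V_k ∘ Z_k ∘ V_k, and let the initial state Φ have coordinates Φ((y_k,y'_k)_k, a,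 b) = Π_{k=1}^{ℓ} 2^(−2^(ℓ−k)/2) if a = 0, b = 0 and y'_k = y_k for all k, and 0 otherwise. Then for every k ∈ {0,…,ℓ}, the state (G_k ∘ ⋯ ∘ G_1)(Φ) has coordinate at ((y_j,y'_j)_j, a, b) equal to Π_{j=1}^{ℓ} 2^(−2^(ℓ−j)/2) if a = 0, b = 0, y'_j = y_{j−1}[i_j] + y_j for all j with 1 ≤ j ≤ k (where y_0 = x), and y'_j = y_j for all j with k < j ≤ ℓ; and equal to 0 otherwise. -/

import Mathlib

/-! Every iteration is computed in coordinates. Since adding the same bit twice is the identity in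
`ZMod 2`, the block `V ∘ Z ∘ V` acts diagonally: on basis vectors with both answer qubits zero it
multiplies by the sign `(-1)^(y_k · y_{k-1}[i_k])` (`VZV_apply`). The Hadamard step replaces a
state by its Fourier transform in the register pair `k` (`hadamard_apply`).

Suppose the state is the uniform superposition in which register `k` satisfies `y'_k = y_k`. The
register pair `k` then contributes the sum over `z` of `(-1)^(z · (u + v + y_{k-1}[i_k]))`, and by
orthogonality of characters (`sum_sgn_ip`) this is nonzero exactly when `v = y_{k-1}[i_k] + u`. The
size of the character group cancels the normalization of the Hadamard transform, so the amplitude is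
unchanged. The conditions on the other registers are not affected: the condition on register
`j < k` involves only `y_{j-1}, y_j, y'_j`, and the one on `j > k` involves only `y_j, y'_j`.
Induction on `k` finishes the proof. -/


open scoped BigOperators

/-- Inner product of two bit strings, in `ZMod 2`. -/
def ip {m : ℕ} (u v : Fin m → ZMod 2) : ZMod 2 := ∑ t, u t * v t

/-- The half `z[j]` of a bit string `z` of length `2^s`: the first half if `j = 0`,
the second half if `j = 1` (i.e. `z[j](t) = z(j·2^(s-1) + t)` for `s ≥ 1`). -/
def half {s : ℕ} (z : Fin (2 ^ s) → ZMod 2) (j : ZMod 2) : Fin (2 ^ (s - 1)) → ZMod 2 :=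
  fun t => z ⟨(j.val * 2 ^ (s - 1) + t.val) % 2 ^ s, Nat.mod_lt _ (by positivity)⟩

/-- The content of register `R_k` (0-indexed: `Reg ℓ k` is the paper's `R_{k+1}`,
a register of `2^(ℓ-(k+1))` qubits). -/
abbrev Reg (ℓ : ℕ) (k : Fin ℓ) := Fin (2 ^ (ℓ - (k.val + 1))) → ZMod 2

/-- Basis index type: contents of all registers `(R_k, R'_k)` together with the two
answer qubits `Q_0, Q_1`. -/
abbrev T (ℓ : ℕ) := ((k : Fin ℓ) → Reg ℓ k × Reg ℓ k) × ZMod 2 × ZMod 2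

/-- Standard basis vector of `EuclideanSpace ℂ ι` supported at `p`. -/
noncomputable def e {ι : Type*} [DecidableEq ι] [Fintype ι] (p : ι) : EuclideanSpace ℂ ι :=
  EuclideanSpace.single p 1

/-- The string `y_{k-1}` (with the convention `y_0 = x`): for 0-indexed `k`, this is `x`
if `k = 0` and the content of the previous register otherwise. -/
def prev {ℓ : ℕ} (x : Fin (2 ^ ℓ) → ZMod 2) (y : (k : Fin ℓ) → Reg ℓ k) :
    (k : Fin ℓ) → Fin (2 ^ (ℓ - k.val)) → ZMod 2 :=
  fun k => match k with
    | ⟨0, _⟩ => x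
    | ⟨j + 1, hj⟩ => y ⟨j, by omega⟩

/-- `iterComp G k = G (k-1) ∘ ⋯ ∘ G 1 ∘ G 0`. -/
noncomputable def iterComp {E : Type*} [AddCommMonoid E] [Module ℂ E]
    (G : ℕ → (E →ₗ[ℂ] E)) : ℕ → (E →ₗ[ℂ] E)
  | 0 => LinearMap.id
  | k + 1 => (G k).comp (iterComp G k)

/-- The sign `(-1)^b` attached to a bit `b`. -/
noncomputable def sgn (b : ZMod 2) : ℂ := (-1) ^ b.val

lemma sgn_zero : sgn 0 = 1 := by simp [sgn]

lemma sgn_one : sgn 1 = -1 := by simp [sgn, ZMod.val_one]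

lemma bit_cases (b : ZMod 2) : b = 0 ∨ b = 1 := by
  revert b; decide

lemma bit_add_self (b : ZMod 2) : b + b = 0 := by
  revert b; decide

lemma sgn_add (a b : ZMod 2) : sgn (a + b) = sgn a * sgn b := by
  rcases bit_cases a with rfl | rfl <;> rcases bit_cases b with rfl | rfl <;>
    simp [sgn_zero, sgn_one, bit_add_self]

lemma sgn_sum {m : ℕ} (f : Fin m → ZMod 2) : sgn (∑ t, f t) = ∏ t, sgn (f t) := by
  induction m with
  | zero => simp [sgn_zero]
  | succ m ih => rw [Fin.sum_univ_succ, Fin.prod_univ_succ, sgn_add, ih]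

lemma sum_sgn_mul (w : ZMod 2) : ∑ b : ZMod 2, sgn (b * w) = if w = 0 then 2 else 0 := by
  have h : ∀ f : ZMod 2 → ℂ, ∑ b, f b = f 0 + f 1 := fun f => Fin.sum_univ_two f
  rw [h]
  rcases bit_cases w with rfl | rfl
  · norm_num [sgn_zero]
  · simp [sgn_zero, sgn_one]

/-- Orthogonality of the characters of `(ZMod 2)^m`. -/
lemma sum_sgn_ip {m : ℕ} (w : Fin m → ZMod 2) :
    ∑ z : Fin m → ZMod 2, sgn (ip z w) = if w = 0 then (2 : ℂ) ^ m else 0 := by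
  simp only [ip, sgn_sum]
  rw [← Fintype.prod_sum (fun t (b : ZMod 2) => sgn (b * w t))]
  simp only [sum_sgn_mul]
  split_ifs with h
  · simp [h]
  · obtain ⟨t, ht⟩ := Function.ne_iff.mp h
    exact Finset.prod_eq_zero (Finset.mem_univ t) (if_neg ht)

lemma ip_add {m : ℕ} (z u v : Fin m → ZMod 2) : ip z (u + v) = ip z u + ip z v := by
  simp [ip, mul_add, Finset.sum_add_distrib]

/-- Matrix form of a linear map on `EuclideanSpace`. -/
lemma linearMap_apply {ι : Type*} [DecidableEq ι] [Fintype ι]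
    (L : EuclideanSpace ℂ ι →ₗ[ℂ] EuclideanSpace ℂ ι) (φ : EuclideanSpace ℂ ι) (p : ι) :
    L φ p = ∑ q, φ q * L (e q) p := by
  have h : φ = ∑ q, φ q • e q := by
    ext r
    simp [e, Finset.sum_apply, Pi.single_apply]
  conv_lhs => rw [h]
  simp [map_sum, Finset.sum_apply]

lemma e_apply {ι : Type*} [DecidableEq ι] [Fintype ι] (q p : ι) :
    e q p = if p = q then 1 else 0 := by
  simp [e]

/-- A sum over the values written into register pair `k` of `q` picks out the single value
that can turn `q` into `p`. -/
lemma sum_update {ℓ : ℕ} (k : Fin ℓ) (p q : T ℓ) (f : Reg ℓ k × Reg ℓ k → ℂ) :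
    ∑ w, f w * (if p = (Function.update q.1 k w, q.2) then 1 else 0) =
      if (p.2 = q.2 ∧ ∀ j, j ≠ k → p.1 j = q.1 j) then f (p.1 k) else 0 := by
  have key : ∀ w, p = (Function.update q.1 k w, q.2) ↔
      (p.2 = q.2 ∧ ∀ j, j ≠ k → p.1 j = q.1 j) ∧ w = p.1 k := by
    intro w
    rw [Prod.ext_iff, Function.eq_update_iff]
    constructor
    · rintro ⟨⟨h1, h2⟩, h3⟩
      exact ⟨⟨h3, h2⟩, h1.symm⟩
    · rintro ⟨⟨h3, h2⟩, h1⟩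
      exact ⟨⟨h1.symm, h2⟩, h3⟩
  simp only [key]
  split_ifs with h
  · simp only [eq_true h, true_and]
    simp
  · simp only [eq_false h, false_and]
    simp

/-- The Hadamard step in coordinates: a Fourier transform in register pair `k`. -/
lemma hadamard_apply {ℓ : ℕ} (k : Fin ℓ)
    (H : EuclideanSpace ℂ (T ℓ) →ₗ[ℂ] EuclideanSpace ℂ (T ℓ)) (c : ℂ)
    (hH : ∀ p : T ℓ, H (e p) = c • ∑ u : Reg ℓ k, ∑ v : Reg ℓ k,
      sgn (ip (p.1 k).1 u + ip (p.1 k).2 v) • e (Function.update p.1 k (u, v), p.2))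
    (φ : EuclideanSpace ℂ (T ℓ)) (p : T ℓ) :
    H φ p = c * ∑ w : Reg ℓ k × Reg ℓ k,
      sgn (ip w.1 (p.1 k).1 + ip w.2 (p.1 k).2) * φ (Function.update p.1 k w, p.2) := by
  have hHe : ∀ q : T ℓ, H (e q) p = c * if (p.2 = q.2 ∧ ∀ j, j ≠ k → p.1 j = q.1 j) then
      sgn (ip (q.1 k).1 (p.1 k).1 + ip (q.1 k).2 (p.1 k).2) else 0 := by
    intro q
    rw [hH, ← sum_update k p q (fun w => sgn (ip (q.1 k).1 w.1 + ip (q.1 k).2 w.2)),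
      Fintype.sum_prod_type]
    simp [Finset.sum_apply, e_apply]
  rw [linearMap_apply, Finset.mul_sum]
  simp only [hHe]
  calc _ = ∑ q, c * φ q * ∑ w : Reg ℓ k × Reg ℓ k,
        sgn (ip w.1 (p.1 k).1 + ip w.2 (p.1 k).2) *
          (if q = (Function.update p.1 k w, p.2) then 1 else 0) := by
        refine Finset.sum_congr rfl fun q _ => ?_
        rw [sum_update k q p (fun w => sgn (ip w.1 (p.1 k).1 + ip w.2 (p.1 k).2))]
        have : (p.2 = q.2 ∧ ∀ j, j ≠ k → p.1 j = q.1 j) ↔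
            (q.2 = p.2 ∧ ∀ j, j ≠ k → q.1 j = p.1 j) := by
          simp only [eq_comm]
        simp only [this]
        ring
    _ = _ := by
        simp only [Finset.mul_sum]
        rw [Finset.sum_comm]
        refine Finset.sum_congr rfl fun w _ => ?_
        simp [mul_assoc, mul_comm]

/-- `V ∘ Z ∘ V` is diagonal: the two shifts of the answer qubits cancel. -/
lemma VZV_apply {ι : Type*} [DecidableEq ι] [Fintype ι]
    (V Z : EuclideanSpace ℂ ι →ₗ[ℂ] EuclideanSpace ℂ ι) (σ : ι → ι) (s : ι → ℂ)
    (hσ : ∀ p, σ (σ p) = p) (hV : ∀ p, V (e p) = e (σ p)) (hZ : ∀ p, Z (e p) = s p • e p)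
    (φ : EuclideanSpace ℂ ι) (p : ι) :
    (V.comp (Z.comp V)) φ p = s (σ p) * φ p := by
  rw [linearMap_apply]
  simp [hV, hZ, hσ, e_apply, mul_comm]

/-- The string `y_{k-1}` does not depend on the contents of register `j` when `k ≤ j`. -/
lemma prev_update {ℓ : ℕ} (x : Fin (2 ^ ℓ) → ZMod 2) (y : (k : Fin ℓ) → Reg ℓ k × Reg ℓ k)
    (j k : Fin ℓ) (hk : k.val ≤ j.val) (w : Reg ℓ j × Reg ℓ j) :
    prev x (fun s => (Function.update y j w s).1) k = prev x (fun s => (y s).1) k := by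
  obtain ⟨k, hkl⟩ := k
  cases k with
  | zero => rfl
  | succ n =>
    have hne : (⟨n, by omega⟩ : Fin ℓ) ≠ j := by
      intro h; have := congrArg Fin.val h; simp at this hk; omega
    simp only [prev, Function.update_of_ne hne]

/-- Lemma 5 of the paper: the joint state of all registers after the `k`-th iteration of
Step 1 of the entanglement-assisted quantum PIR protocol. Here `V k.val`, `Z k.val`,
`H k.val`, `G k.val` (for `k : Fin ℓ`) are the paper's `V_{k+1}`, the Pauli-`Z` step, the
Hadamard step and the whole `(k+1)`-st iteration, respectively. -/
theorem stmt9 (ℓ : ℕ) (hℓ : 0 < ℓ) (x : Fin (2 ^ ℓ) → ZMod 2) (i : Fin ℓ → ZMod 2)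
    (V Z H G : ℕ → (EuclideanSpace ℂ (T ℓ) →ₗ[ℂ] EuclideanSpace ℂ (T ℓ)))
    (Φ : EuclideanSpace ℂ (T ℓ))
    (hV : ∀ (k : Fin ℓ) (p : T ℓ),
      V k.val (e p) = e (p.1,
        p.2.1 + ip (p.1 k).1 (fun t => half (prev x (fun j => (p.1 j).1) k) 0 t),
        p.2.2 + ip (p.1 k).1 (fun t => half (prev x (fun j => (p.1 j).1) k) 1 t)))
    (hZ : ∀ (k : Fin ℓ) (p : T ℓ),
      Z k.val (e p) =
        (if i k = 0 then (-1 : ℂ) ^ (p.2.1.val) else (-1 : ℂ) ^ (p.2.2.val)) • e p)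
    (hH : ∀ (k : Fin ℓ) (p : T ℓ),
      H k.val (e p) = ((2 : ℂ) ^ (2 ^ (ℓ - (k.val + 1))))⁻¹ •
        ∑ u : Reg ℓ k, ∑ v : Reg ℓ k,
          (-1 : ℂ) ^ ((ip (p.1 k).1 u + ip (p.1 k).2 v).val) •
            e (Function.update p.1 k (u, v), p.2.1, p.2.2))
    (hG : ∀ k : Fin ℓ, G k.val = (H k.val).comp ((V k.val).comp ((Z k.val).comp (V k.val))))
    (hΦ : ∀ p : T ℓ, Φ p =
      if p.2.1 = 0 ∧ p.2.2 = 0 ∧ ∀ k : Fin ℓ, (p.1 k).2 = (p.1 k).1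
      then ∏ k : Fin ℓ, ((Real.sqrt (2 ^ (2 ^ (ℓ - (k.val + 1)))) : ℂ))⁻¹ else 0) :
    ∀ k : ℕ, k ≤ ℓ → ∀ p : T ℓ, iterComp G k Φ p =
      if p.2.1 = 0 ∧ p.2.2 = 0 ∧ ∀ j : Fin ℓ,
          (j.val < k →
            (p.1 j).2 = fun t => half (prev x (fun s => (p.1 s).1) j) (i j) t + (p.1 j).1 t) ∧
          (k ≤ j.val → (p.1 j).2 = (p.1 j).1)
      then ∏ j : Fin ℓ, ((Real.sqrt (2 ^ (2 ^ (ℓ - (j.val + 1)))) : ℂ))⁻¹ else 0 := by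
  intro k
  induction k with
  | zero =>
    intro _ p
    simpa [iterComp] using hΦ p
  | succ k ih =>
    intro hk p
    have ih := ih (by omega)
    obtain ⟨K, rfl⟩ : ∃ K : Fin ℓ, K.val = k := ⟨⟨k, hk⟩, rfl⟩
    set A : ℂ := ∏ j : Fin ℓ, ((Real.sqrt (2 ^ (2 ^ (ℓ - (j.val + 1)))) : ℂ))⁻¹
    -- the string `y_{k-1}[i_k]`, as a function of the register contents
    let h : T ℓ → Reg ℓ K := fun p t => half (prev x (fun s => (p.1 s).1) K) (i K) t
    let ψ := iterComp G K.val Φ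
    -- the condition on all register pairs other than `K`
    let C : T ℓ → Prop := fun p => p.2.1 = 0 ∧ p.2.2 = 0 ∧ ∀ j : Fin ℓ,
      (j.val < K.val →
        (p.1 j).2 = fun t => half (prev x (fun s => (p.1 s).1) j) (i j) t + (p.1 j).1 t) ∧
      (K.val < j.val → (p.1 j).2 = (p.1 j).1)
    have hψ : ∀ q : T ℓ, ψ q = if C q ∧ (q.1 K).2 = (q.1 K).1 then A else 0 := by
      intro q
      refine (ih q).trans (if_congr ⟨?_, ?_⟩ rfl rfl)
      · rintro ⟨h1, h2, h3⟩
        exact ⟨⟨h1, h2, fun j => ⟨(h3 j).1, fun hj => (h3 j).2 hj.le⟩⟩, (h3 K).2 le_rfl⟩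
      · rintro ⟨⟨h1, h2, h3⟩, h4⟩
        refine ⟨h1, h2, fun j => ⟨(h3 j).1, fun hj => ?_⟩⟩
        rcases hj.eq_or_lt with hj | hj
        · obtain rfl : K = j := Fin.ext hj
          exact h4
        · exact (h3 j).2 hj
    have hCu : ∀ w, C (Function.update p.1 K w, p.2) ↔ C p := by
      intro w
      refine and_congr Iff.rfl (and_congr Iff.rfl (forall_congr' fun j => and_congr ?_ ?_))
      · refine imp_congr_right fun hj => ?_
        have hne : j ≠ K := fun hjk => by simp [hjk] at hj
        simp only [Function.update_of_ne hne, prev_update x p.1 K j hj.le w]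
      · refine imp_congr_right fun hj => ?_
        have hne : j ≠ K := fun hjk => by simp [hjk] at hj
        simp only [Function.update_of_ne hne]
    have hhu : ∀ w, h (Function.update p.1 K w, p.2) = h p := by
      intro w
      funext t
      simp only [h, prev_update x p.1 K K le_rfl w]
    have hVZV : ∀ q : T ℓ, ((V K.val).comp ((Z K.val).comp (V K.val))) ψ q =
        if C q ∧ (q.1 K).2 = (q.1 K).1 then sgn (ip (q.1 K).1 (h q)) * A else 0 := by
      intro q
      rw [VZV_apply (V K.val) (Z K.val) _ _ ?_ (hV K) (hZ K), hψ]
      · by_cases hC : C q ∧ (q.1 K).2 = (q.1 K).1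
        · rw [if_pos hC, if_pos hC]
          rcases bit_cases (i K) with hi | hi
          · simp [sgn, h, hi, hC.1.1]
          · simp [sgn, h, hi, hC.1.2.1]
        · rw [if_neg hC, if_neg hC, mul_zero]
      · rintro ⟨y, a, b⟩
        simp [add_assoc, bit_add_self]
    have hGo : iterComp G (K.val + 1) Φ p =
        H K.val (((V K.val).comp ((Z K.val).comp (V K.val))) ψ) p := by
      rw [iterComp, hG K]; rfl
    have hind : ∀ w : Reg ℓ K × Reg ℓ K,
        sgn (ip w.1 (p.1 K).1 + ip w.2 (p.1 K).2) *
          ((V K.val).comp ((Z K.val).comp (V K.val))) ψ (Function.update p.1 K w, p.2) =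
        if w.2 = w.1 then
          (if C p then sgn (ip w.1 ((p.1 K).1 + (p.1 K).2 + h p)) * A else 0) else 0 := by
      intro w
      rw [hVZV, hhu, if_congr (and_congr_left' (hCu w)) rfl rfl]
      simp only [Function.update_self]
      by_cases hC : C p <;> by_cases hw : w.2 = w.1 <;> simp [hC, hw, ip_add, sgn_add, mul_assoc]
    rw [hGo, hadamard_apply K (H K.val) _ (hH K)]
    simp only [hind]
    rw [Fintype.sum_prod_type]
    simp only [Finset.sum_ite_eq', Finset.mem_univ, if_true]
    have hcond : (p.2.1 = 0 ∧ p.2.2 = 0 ∧ ∀ j : Fin ℓ,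
          (j.val < K.val + 1 →
            (p.1 j).2 = fun t => half (prev x (fun s => (p.1 s).1) j) (i j) t + (p.1 j).1 t) ∧
          (K.val + 1 ≤ j.val → (p.1 j).2 = (p.1 j).1)) ↔
        C p ∧ (p.1 K).1 + (p.1 K).2 + h p = 0 := by
      have hK : (p.1 K).1 + (p.1 K).2 + h p = 0 ↔ (p.1 K).2 = fun t => h p t + (p.1 K).1 t := by
        simp only [funext_iff]
        refine forall_congr' fun t => ?_
        simp only [Pi.add_apply, Pi.zero_apply]
        generalize (p.1 K).1 t = a
        generalize (p.1 K).2 t = b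
        generalize h p t = c
        revert a b c
        decide
      rw [hK]
      constructor
      · rintro ⟨h1, h2, h3⟩
        exact ⟨⟨h1, h2, fun j => ⟨fun hj => (h3 j).1 (by omega), fun hj => (h3 j).2 hj⟩⟩,
          (h3 K).1 (by omega)⟩
      · rintro ⟨⟨h1, h2, h3⟩, h4⟩
        refine ⟨h1, h2, fun j => ⟨fun hj => ?_, fun hj => (h3 j).2 hj⟩⟩
        rcases (Nat.lt_succ_iff.mp hj).eq_or_lt with hj | hj
        · obtain rfl : j = K := Fin.ext hj
          exact h4
        · exact (h3 j).1 hj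
    rw [if_congr hcond rfl rfl]
    by_cases hC : C p
    · simp only [hC, if_true, true_and]
      rw [← Finset.sum_mul, sum_sgn_ip]
      split_ifs with h0
      · rw [← mul_assoc, inv_mul_cancel₀ (pow_ne_zero _ two_ne_zero), one_mul]
      · simp
    · simp [hC]
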